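/- Let n ≥ m ≥ 1 and let B_1,…,B_r ∈ ℝ^{n×m} satisfy Σ_{k=1}^r B_k^⊤B_k = I_m and Σ_{k=1}^r B_kB_k^⊤ ⪯ I_n. Let z_1,…,z_r be independent standard Gaussian real random variables on a probability space, set G = Σ_{k=1}^r z_k B_k, and let W = Σ_{k=1}^r vec(B_k)vec(B_k)^⊤ ∈ S^{nm}_+. Then σmax(G) > 0 almost surely, and for every v ∈ ℝ^{nm}, E[(v^⊤vec(G))²/σmax(G)²] ≥ max(2/(π·m), 1/(π·(log(2m)+1))) · v^⊤Wv; that is, E[vec(G)vec(G)^⊤/σmax(G)²] ⪰ max(2/(πm), 1/(π(log(2m)+1))) · W in the Loewner order. -/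

import Mathlib

open MeasureTheory ProbabilityTheory Matrix

/-- The largest singular value (spectral norm) of a real matrix. -/
noncomputable def sigmaMax {n m : ℕ} (G : Matrix (Fin n) (Fin m) ℝ) : ℝ :=
  ‖LinearMap.toContinuousLinearMap (Matrix.toEuclideanLin G)‖

/-- `vec(U)`: stacking the columns of `U`, indexed by (column, row) pairs. -/
def vecM {n m : ℕ} (U : Matrix (Fin n) (Fin m) ℝ) : Fin m × Fin n → ℝ :=
  fun p => U p.2 p.1

/-!
By Cauchy–Schwarz, `(E |vᵀ vec G|)² ≤ E[(vᵀ vec G)² / ‖G‖²] * E ‖G‖²`. Since `vᵀ vec G` is a centred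
Gaussian variable of variance `vᵀ W v`, the left-hand side is `(2 / π) * vᵀ W v`, and it remains to
bound `E ‖G‖²` by `m` and by `2 log (2m)`.

Let `H` be the Hermitian dilation of `G`, again a Gaussian series `∑ zₖ Aₖ`. Integration by parts
writes `E tr H ^ (2p + 2)` as a sum of `2p + 1` traces `E tr (Aₖ H ^ (2p - q) Aₖ H ^ q)` for each
`k`. In an eigenbasis of `H` each of them is at most `E tr (Aₖ² H ^ (2p))`, because
`aⁱ bʲ + bⁱ aʲ ≤ aⁱ⁺ʲ + bⁱ⁺ʲ` for even `i + j`. As `∑ Aₖ² ≤ 1`, induction gives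
`E ‖G‖ ^ (2p) ≤ m (2p - 1)‼`. The case `p = 1` is the first bound. For the second, put
`s = E ‖G‖²`; Jensen's inequality gives `s ^ p ≤ m (2p - 1)‼` for all `p`, and summing the series
of `cosh` yields `exp s / 2 ≤ cosh s ≤ m exp (s / 2)`.
-/

section GaussianIntegrationByParts

open scoped NNReal

variable {E : Type*} [NormedAddCommGroup E] [NormedSpace ℝ E]

theorem hasDerivAt_gaussianPDFReal (m : ℝ) (v : ℝ≥0) (x : ℝ) :
    HasDerivAt (gaussianPDFReal m v) (-((x - m) / v) * gaussianPDFReal m v x) x := by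
  have hexponent : HasDerivAt (fun y : ℝ ↦ -(y - m) ^ 2 / (2 * v)) (-((x - m) / v)) x := by
    refine (((hasDerivAt_id x).sub_const m).pow 2).neg.div_const (2 * (v : ℝ)) |>.congr_deriv ?_
    rw [pow_one, mul_one, neg_div, id, Nat.cast_ofNat, mul_div_mul_left _ _ two_ne_zero]
  refine (hexponent.exp.const_mul (√(2 * Real.pi * v))⁻¹).congr_deriv ?_
  rw [gaussianPDFReal_def]
  ring

theorem integrable_gaussianReal_iff {m : ℝ} {v : ℝ≥0} (hv : v ≠ 0) {f : ℝ → E} :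
    Integrable f (gaussianReal m v) ↔ Integrable fun x ↦ gaussianPDFReal m v x • f x := by
  rw [gaussianReal_of_var_ne_zero m hv, integrable_withDensity_iff_integrable_smul'
    (measurable_gaussianPDF m v) (ae_of_all _ fun _ ↦ gaussianPDF_lt_top)]
  simp only [toReal_gaussianPDF]

theorem integral_sub_smul_gaussianReal {m : ℝ} {v : ℝ≥0} {f f' : ℝ → E}
    (hf : ∀ x, HasDerivAt f (f' x) x) (hint : Integrable f (gaussianReal m v))
    (hint' : Integrable f' (gaussianReal m v))
    (hmul : Integrable (fun x ↦ (x - m) • f x) (gaussianReal m v)) :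
    ∫ x, (x - m) • f x ∂gaussianReal m v = (v : ℝ) • ∫ x, f' x ∂gaussianReal m v := by
  rcases eq_or_ne v 0 with rfl | hv
  · have hzero : ∀ᵐ x ∂gaussianReal m 0, (x - m) • f x = 0 := by
      rw [gaussianReal_zero_var, ae_dirac_eq]
      simp
    simp only [integral_eq_zero_of_ae hzero, NNReal.coe_zero, zero_smul]
  rw [integrable_gaussianReal_iff hv] at hint hint' hmul
  replace hint' : Integrable fun x ↦ (v : ℝ) • gaussianPDFReal m v x • f' x := hint'.smul _
  have hderiv : ∀ x, HasDerivAt (fun x ↦ (v : ℝ) • gaussianPDFReal m v x • f x)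
      ((v : ℝ) • gaussianPDFReal m v x • f' x - gaussianPDFReal m v x • (x - m) • f x) x := by
    intro x
    refine (((hasDerivAt_gaussianPDFReal m v x).fun_smul (hf x)).fun_const_smul (v : ℝ)).congr_deriv
      ?_
    have hv' : (v : ℝ) ≠ 0 := by exact_mod_cast hv
    have hcoeff : (v : ℝ) * (-((x - m) / v) * gaussianPDFReal m v x)
        = -(gaussianPDFReal m v x * (x - m)) := by
      field_simp
    rw [smul_add, smul_smul _ _ (f x), hcoeff, neg_smul, mul_smul, ← sub_eq_add_neg]
  have hzero := integral_eq_zero_of_hasDerivAt_of_integrable hderiv (hint'.sub hmul) (hint.smul _)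
  rw [integral_sub hint' hmul, integral_smul, sub_eq_zero] at hzero
  rw [integral_gaussianReal_eq_integral_smul hv, integral_gaussianReal_eq_integral_smul hv, hzero]

theorem measurePreserving_update {ι : Type*} [Fintype ι] [DecidableEq ι] {X : ι → Type*}
    [∀ i, MeasurableSpace (X i)] (μ : ∀ i, Measure (X i)) [∀ i, IsProbabilityMeasure (μ i)]
    (k : ι) :
    MeasurePreserving (fun p : (∀ i, X i) × X k ↦ Function.update p.1 k p.2)
      ((Measure.pi μ).prod (μ k)) (Measure.pi μ) := by
  refine ⟨measurable_update', (Measure.pi_eq fun s hs ↦ ?_).symm⟩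
  have hpre : (fun p : (∀ i, X i) × X k ↦ Function.update p.1 k p.2) ⁻¹' Set.univ.pi s
      = Set.univ.pi (Function.update s k Set.univ) ×ˢ s k := by
    ext p
    simp only [Set.mem_preimage, Set.mem_prod, Set.mem_univ_pi, Function.forall_update_iff p.1
      (p := fun i y ↦ y ∈ s i), Function.forall_update_iff s (p := fun i t ↦ p.1 i ∈ t)]
    simp [and_comm]
  rw [Measure.map_apply measurable_update' (.univ_pi hs), hpre, Measure.prod_prod, Measure.pi_pi,
    ← Finset.prod_erase_mul _ _ (Finset.mem_univ k), Function.update_self, measure_univ, mul_one,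
    ← Finset.prod_erase_mul _ (fun i ↦ μ i (s i)) (Finset.mem_univ k)]
  congr 1
  refine Finset.prod_congr rfl fun i hi ↦ ?_
  rw [Function.update_of_ne (Finset.ne_of_mem_erase hi)]

variable {σ : Type*} [DecidableEq σ]

theorem integral_sub_smul_pi_gaussianReal [Fintype σ] {m : σ → ℝ} {v : σ → ℝ≥0} {k : σ}
    {f f' : (σ → ℝ) → E}
    (hf : ∀ x, HasDerivAt (fun t ↦ f (Function.update x k t)) (f' x) (x k))
    (hint : Integrable f (Measure.pi fun i ↦ gaussianReal (m i) (v i)))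
    (hint' : Integrable f' (Measure.pi fun i ↦ gaussianReal (m i) (v i)))
    (hmul : Integrable (fun x ↦ (x k - m k) • f x)
      (Measure.pi fun i ↦ gaussianReal (m i) (v i))) :
    ∫ x, (x k - m k) • f x ∂Measure.pi (fun i ↦ gaussianReal (m i) (v i))
      = (v k : ℝ) • ∫ x, f' x ∂Measure.pi (fun i ↦ gaussianReal (m i) (v i)) := by
  set P := Measure.pi fun i ↦ gaussianReal (m i) (v i)
  have hupd : MeasurePreserving (fun p : (σ → ℝ) × ℝ ↦ Function.update p.1 k p.2)
    (P.prod (gaussianReal (m k) (v k))) P := measurePreserving_update _ k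
  have slice {g : (σ → ℝ) → E} (hg : Integrable g P) :
      ∀ᵐ x ∂P, Integrable (fun t ↦ g (Function.update x k t)) (gaussianReal (m k) (v k)) :=
    (hupd.integrable_comp_of_integrable hg).prod_right_ae
  have fubini {g : (σ → ℝ) → E} (hg : Integrable g P) :
      ∫ x, g x ∂P = ∫ x, ∫ t, g (Function.update x k t) ∂gaussianReal (m k) (v k) ∂P := by
    rw [← HasLaw.integral_comp ⟨hupd.aemeasurable, hupd.map_eq⟩ hg.1]
    exact integral_prod _ (hupd.integrable_comp_of_integrable hg)
  rw [fubini hmul, fubini hint', ← integral_smul]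
  refine integral_congr_ae ?_
  filter_upwards [slice hint, slice hint', slice hmul] with x hx hx' hxmul
  simp only [Function.update_self] at hxmul ⊢
  refine integral_sub_smul_gaussianReal (fun t ↦ ?_) hx hx' hxmul
  simpa using hf (Function.update x k t)

theorem integral_sub_smul_of_iIndepFun [Finite σ] {Ω : Type*} [MeasurableSpace Ω] {μ : Measure Ω}
    {z : σ → Ω → ℝ} (hindep : iIndepFun z μ) {m : σ → ℝ} {v : σ → ℝ≥0}
    (hz : ∀ k, HasLaw (z k) (gaussianReal (m k) (v k)) μ) {k : σ} {f f' : (σ → ℝ) → E}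
    (hf : ∀ x, HasDerivAt (fun t ↦ f (Function.update x k t)) (f' x) (x k))
    (hmeas : StronglyMeasurable f) (hmeas' : StronglyMeasurable f')
    (hint : Integrable (fun ω ↦ f (z · ω)) μ) (hint' : Integrable (fun ω ↦ f' (z · ω)) μ)
    (hmul : Integrable (fun ω ↦ (z k ω - m k) • f (z · ω)) μ) :
    ∫ ω, (z k ω - m k) • f (z · ω) ∂μ = (v k : ℝ) • ∫ ω, f' (z · ω) ∂μ := by
  cases nonempty_fintype σ
  have hlaw := hindep.hasLaw_pi hz
  have hmeasmul : StronglyMeasurable fun x : σ → ℝ ↦ (x k - m k) • f x :=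
    ((measurable_pi_apply k).sub_const (m k)).stronglyMeasurable.smul hmeas
  have integrable_iff {g : (σ → ℝ) → E} (hg : StronglyMeasurable g) :
      Integrable g (Measure.pi fun i ↦ gaussianReal (m i) (v i)) ↔
        Integrable (fun ω ↦ g (z · ω)) μ := by
    rw [← hlaw.map_eq]
    exact integrable_map_measure hg.aestronglyMeasurable hlaw.aemeasurable
  have key := integral_sub_smul_pi_gaussianReal hf ((integrable_iff hmeas).2 hint)
    ((integrable_iff hmeas').2 hint') ((integrable_iff hmeasmul).2 hmul)
  rwa [← hlaw.integral_comp hmeasmul.aestronglyMeasurable,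
    ← hlaw.integral_comp hmeas'.aestronglyMeasurable] at key

end GaussianIntegrationByParts

section GaussianSeries

open scoped ENNReal NNReal

variable {Ω : Type*} [MeasurableSpace Ω] {μ : Measure Ω}

theorem memLp_smul_of_forall_memLp {𝕜 E : Type*} [NormedRing 𝕜] [NormedAddCommGroup E]
    [Module 𝕜 E] [IsBoundedSMul 𝕜 E] {X : Ω → 𝕜} {Y : Ω → E}
    (hX : ∀ p : ℝ≥0∞, p ≠ ∞ → MemLp X p μ) (hY : ∀ p : ℝ≥0∞, p ≠ ∞ → MemLp Y p μ) :
    ∀ p : ℝ≥0∞, p ≠ ∞ → MemLp (fun ω ↦ X ω • Y ω) p μ := by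
  intro p hp
  have h2p : 2 * p ≠ ∞ := ENNReal.mul_ne_top ENNReal.ofNat_ne_top hp
  have : ENNReal.HolderTriple (2 * p) (2 * p) p := ⟨by
    rw [ENNReal.mul_inv (.inl two_ne_zero) (.inl ENNReal.ofNat_ne_top), ← add_mul,
      ENNReal.inv_two_add_inv_two, one_mul]⟩
  exact (hY _ h2p).smul (hX _ h2p)

theorem memLp_pow_of_forall_memLp [IsFiniteMeasure μ] {𝔸 : Type*} [NormedRing 𝔸] {X : Ω → 𝔸}
    (hX : ∀ p : ℝ≥0∞, p ≠ ∞ → MemLp X p μ) (n : ℕ) :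
    ∀ p : ℝ≥0∞, p ≠ ∞ → MemLp (fun ω ↦ X ω ^ n) p μ := by
  induction n with
  | zero => exact fun p _ ↦ by simpa only [pow_zero] using memLp_const 1
  | succ n ih =>
    simp only [pow_succ]
    exact memLp_smul_of_forall_memLp ih hX

variable {σ : Type*} [Fintype σ] {z : σ → Ω → ℝ}

theorem memLp_sum_smul {E : Type*} [NormedAddCommGroup E] [NormedSpace ℝ E]
    (hz : ∀ k, HasGaussianLaw (z k) μ) (A : σ → E) :
    ∀ p : ℝ≥0∞, p ≠ ∞ → MemLp (fun ω ↦ ∑ k, z k ω • A k) p μ :=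
  fun _ hp ↦ memLp_finsetSum _ fun k _ ↦
    (ContinuousLinearMap.toSpanSingleton ℝ (A k)).comp_memLp' ((hz k).memLp hp)

theorem hasLaw_sum_gaussianReal {m : σ → ℝ} {v : σ → ℝ≥0} (hindep : iIndepFun z μ)
    (hz : ∀ k, HasLaw (z k) (gaussianReal (m k) (v k)) μ) :
    HasLaw (fun ω ↦ ∑ k, z k ω) (gaussianReal (∑ k, m k) (∑ k, v k)) μ := by
  have hgauss k : HasGaussianLaw (z k) μ := (hz k).hasGaussianLaw
  have hsum : HasGaussianLaw (fun ω ↦ ∑ k, z k ω) μ := (hindep.hasGaussianLaw hgauss).fun_sum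
  have hmean : ∫ ω, ∑ k, z k ω ∂μ = ∑ k, m k := by
    rw [integral_finsetSum _ fun k _ ↦ (hgauss k).integrable]
    exact Finset.sum_congr rfl fun k _ ↦ by rw [(hz k).integral_eq, integral_id_gaussianReal]
  have hvar : Var[fun ω ↦ ∑ k, z k ω; μ] = ∑ k, (v k : ℝ) := by
    have hpair : Set.Pairwise ↑(Finset.univ : Finset σ) fun i j ↦ z i ⟂ᵢ[μ] z j :=
      fun i _ j _ hij ↦ hindep.indepFun hij
    rw [← Finset.sum_fn, IndepFun.variance_sum (fun k _ ↦ (hgauss k).memLp_two) hpair]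
    exact Finset.sum_congr rfl fun k _ ↦ by rw [(hz k).variance_eq, variance_id_gaussianReal]
  refine ⟨hsum.aemeasurable, ?_⟩
  rw [hsum.map_eq_gaussianReal, hmean, hvar, ← NNReal.coe_sum, Real.toNNReal_coe]

theorem hasLaw_sum_mul_gaussianReal {m : σ → ℝ} {v : σ → ℝ≥0} (hindep : iIndepFun z μ)
    (hz : ∀ k, HasLaw (z k) (gaussianReal (m k) (v k)) μ) (c : σ → ℝ) :
    HasLaw (fun ω ↦ ∑ k, z k ω * c k)
      (gaussianReal (∑ k, c k * m k) (∑ k, NNReal.mk (c k ^ 2) (sq_nonneg _) * v k)) μ :=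
  hasLaw_sum_gaussianReal (hindep.comp (fun k x ↦ x * c k) fun k ↦ by fun_prop)
    fun k ↦ gaussianReal_mul_const (hz k) (c k)

theorem integral_abs_gaussianReal (v : ℝ≥0) :
    ∫ x, |x| ∂gaussianReal 0 v = √(2 * v / Real.pi) := by
  rcases eq_or_ne v 0 with rfl | hv
  · simp
  have hhalf : ∫ x in Set.Ioi (0 : ℝ), x * Real.exp (-x ^ 2 / (2 * v)) = v := by
    calc ∫ x in Set.Ioi (0 : ℝ), x * Real.exp (-x ^ 2 / (2 * v))
        = ∫ x in Set.Ioi (0 : ℝ), x ^ (1 : ℝ) * Real.exp (-(2 * (v : ℝ))⁻¹ * x ^ (2 : ℝ)) := by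
          simp only [Real.rpow_one, Real.rpow_two, div_eq_inv_mul, neg_mul, mul_neg]
      _ = (2 * (v : ℝ))⁻¹ ^ (-(1 + 1) / 2 : ℝ) * (1 / 2) * Real.Gamma ((1 + 1) / 2) :=
          integral_rpow_mul_exp_neg_mul_rpow two_pos (by norm_num) (by positivity)
      _ = v := by
          rw [neg_div, div_eq_one_iff_eq two_ne_zero |>.2 one_add_one_eq_two, Real.rpow_neg_one,
            inv_inv, Real.Gamma_one]
          ring
  have hpdf (x : ℝ) : gaussianPDFReal 0 v x • |x|
      = (√(2 * Real.pi * v))⁻¹ * (|x| * Real.exp (-|x| ^ 2 / (2 * v))) := by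
    rw [gaussianPDFReal, sub_zero, sq_abs, smul_eq_mul]
    ring
  rw [integral_gaussianReal_eq_integral_smul hv]
  simp only [hpdf]
  rw [integral_const_mul, integral_comp_abs (f := fun x ↦ x * Real.exp (-x ^ 2 / (2 * v))), hhalf,
    eq_comm, Real.sqrt_eq_iff_mul_self_eq (by positivity) (by positivity)]
  field_simp
  rw [Real.sq_sqrt (by positivity)]

theorem integrable_pow_mul_mul_pow [IsFiniteMeasure μ] {𝔸 : Type*} [NormedRing 𝔸] {X : Ω → 𝔸}
    (hX : ∀ p : ℝ≥0∞, p ≠ ∞ → MemLp X p μ) (a : 𝔸) (i j : ℕ) :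
    Integrable (fun ω ↦ X ω ^ i * a * X ω ^ j) μ :=
  memLp_one_iff_integrable.1 <| memLp_smul_of_forall_memLp
    (memLp_smul_of_forall_memLp (memLp_pow_of_forall_memLp hX i) fun _ _ ↦ memLp_const a)
    (memLp_pow_of_forall_memLp hX j) 1 ENNReal.one_ne_top

variable {𝔸 : Type*} [NormedRing 𝔸] [NormedAlgebra ℝ 𝔸]

theorem integrable_sum_smul_pow [IsFiniteMeasure μ] (hz : ∀ k, HasGaussianLaw (z k) μ)
    (A : σ → 𝔸) (n : ℕ) : Integrable (fun ω ↦ (∑ k, z k ω • A k) ^ n) μ :=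
  memLp_one_iff_integrable.1 <|
    memLp_pow_of_forall_memLp (memLp_sum_smul hz A) n 1 ENNReal.one_ne_top

theorem integrable_smul_sum_smul_pow (hz : ∀ k, HasGaussianLaw (z k) μ) (A : σ → 𝔸) (n : ℕ)
    (k : σ) : Integrable (fun ω ↦ z k ω • (∑ i, z i ω • A i) ^ n) μ := by
  have := (hz k).isProbabilityMeasure
  exact memLp_one_iff_integrable.1 <| memLp_smul_of_forall_memLp (fun _ ↦ (hz k).memLp)
    (memLp_pow_of_forall_memLp (memLp_sum_smul hz A) n) 1 ENNReal.one_ne_top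

theorem hasDerivAt_sum_update_smul_pow [DecidableEq σ] (A : σ → 𝔸) (n : ℕ) (k : σ) (x : σ → ℝ) :
    HasDerivAt (fun t ↦ (∑ i, Function.update x k t i • A i) ^ n)
      (∑ q ∈ Finset.range n, (∑ i, x i • A i) ^ (n - 1 - q) * A k * (∑ i, x i • A i) ^ q)
      (x k) := by
  have hlin : HasDerivAt (fun t ↦ ∑ i, Function.update x k t i • A i) (A k) (x k) := by
    have hcoord i : HasDerivAt (fun t ↦ Function.update x k t i • A i)
        ((Pi.single k (1 : ℝ) : σ → ℝ) i • A i) (x k) :=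
      ((hasDerivAt_pi.1 (hasDerivAt_update x k (x k))) i).smul_const (A i)
    refine (HasDerivAt.fun_sum fun i _ ↦ hcoord i).congr_deriv ?_
    rw [Finset.sum_eq_single k (fun i _ hik ↦ by simp [hik]) (by simp), Pi.single_eq_same, one_smul]
  simpa only [Function.update_eq_self, Nat.pred_eq_sub_one] using hlin.fun_pow' n

theorem integral_smul_sum_smul_pow (hindep : iIndepFun z μ)
    (hz : ∀ k, HasLaw (z k) (gaussianReal 0 1) μ) (A : σ → 𝔸) (n : ℕ) (k : σ) :
    ∫ ω, z k ω • (∑ i, z i ω • A i) ^ n ∂μ = ∑ q ∈ Finset.range n,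
      ∫ ω, (∑ i, z i ω • A i) ^ (n - 1 - q) * A k * (∑ i, z i ω • A i) ^ q ∂μ := by
  classical
  have := (hz k).isProbabilityMeasure
  have hgauss k : HasGaussianLaw (z k) μ := (hz k).hasGaussianLaw
  have hint q := integrable_pow_mul_mul_pow (memLp_sum_smul hgauss A) (A k) (n - 1 - q) q
  have hstein := integral_sub_smul_of_iIndepFun hindep hz
    (f := fun x ↦ (∑ i, x i • A i) ^ n) (hasDerivAt_sum_update_smul_pow A n k)
    (Continuous.stronglyMeasurable (by fun_prop)) (Continuous.stronglyMeasurable (by fun_prop))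
    (integrable_sum_smul_pow hgauss A n) (integrable_finsetSum _ fun q _ ↦ hint q)
    (by simpa only [sub_zero] using integrable_smul_sum_smul_pow hgauss A n k)
  simpa only [sub_zero, NNReal.coe_one, one_smul, integral_finsetSum _ fun q _ ↦ hint q]
    using hstein

theorem integral_sum_smul_pow_add_two (hindep : iIndepFun z μ)
    (hz : ∀ k, HasLaw (z k) (gaussianReal 0 1) μ) (A : σ → 𝔸) (n : ℕ) :
    ∫ ω, (∑ i, z i ω • A i) ^ (n + 2) ∂μ = ∑ k, ∑ q ∈ Finset.range (n + 1),
      A k * ∫ ω, (∑ i, z i ω • A i) ^ (n - q) * A k * (∑ i, z i ω • A i) ^ q ∂μ := by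
  have hmul k := integrable_smul_sum_smul_pow (fun i ↦ (hz i).hasGaussianLaw) A (n + 1) k
  calc ∫ ω, (∑ i, z i ω • A i) ^ (n + 2) ∂μ
      = ∫ ω, ∑ k, A k * z k ω • (∑ i, z i ω • A i) ^ (n + 1) ∂μ := by
        congr with ω
        rw [pow_succ', Finset.sum_mul]
        simp only [smul_mul_assoc, mul_smul_comm]
    _ = ∑ k, A k * ∫ ω, z k ω • (∑ i, z i ω • A i) ^ (n + 1) ∂μ := by
        rw [integral_finsetSum _ fun k _ ↦ (hmul k).const_mul (A k)]
        exact Finset.sum_congr rfl fun k _ ↦ integral_const_mul_of_integrable (hmul k)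
    _ = _ := by
        simp only [integral_smul_sum_smul_pow hindep hz, Nat.add_sub_cancel, Finset.mul_sum]

end GaussianSeries

section TraceInequalities

open scoped ComplexOrder Matrix.Norms.L2Operator

theorem pow_mul_pow_add_pow_mul_pow_le {i j : ℕ} (h : Even (i + j)) (a b : ℝ) :
    a ^ i * b ^ j + b ^ i * a ^ j ≤ a ^ (i + j) + b ^ (i + j) := by
  have habs : |a| ^ i * |b| ^ j + |b| ^ i * |a| ^ j ≤ |a| ^ (i + j) + |b| ^ (i + j) := by
    have hmono : 0 ≤ (|a| ^ i - |b| ^ i) * (|a| ^ j - |b| ^ j) := by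
      rcases le_total |a| |b| with hab | hab
      · exact mul_nonneg_of_nonpos_of_nonpos (sub_nonpos.2 (by gcongr)) (sub_nonpos.2 (by gcongr))
      · exact mul_nonneg (sub_nonneg.2 (by gcongr)) (sub_nonneg.2 (by gcongr))
    rw [pow_add, pow_add]
    linarith
  rw [h.pow_abs, h.pow_abs] at habs
  refine (add_le_add ?_ ?_).trans habs <;>
    exact (le_abs_self _).trans_eq (by rw [abs_mul, abs_pow, abs_pow])

variable {ι : Type*} [Fintype ι]

theorem sum_sum_mul_pow_mul_pow_le {w : ι → ι → ℝ} (hw : ∀ i j, 0 ≤ w i j)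
    (hsymm : ∀ i j, w i j = w j i) {q s : ℕ} (h : Even (q + s)) (x : ι → ℝ) :
    ∑ i, ∑ j, w i j * (x j ^ q * x i ^ s) ≤ ∑ i, ∑ j, w i j * x i ^ (q + s) := by
  have hswap (F : ι → ι → ℝ) : ∑ i, ∑ j, w i j * F i j = ∑ i, ∑ j, w i j * F j i := by
    rw [Finset.sum_comm]
    exact Finset.sum_congr rfl fun i _ ↦ Finset.sum_congr rfl fun j _ ↦ by rw [hsymm]
  have hsum : ∑ i, ∑ j, w i j * (x j ^ q * x i ^ s) + ∑ i, ∑ j, w i j * (x i ^ q * x j ^ s)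
      ≤ ∑ i, ∑ j, w i j * x j ^ (q + s) + ∑ i, ∑ j, w i j * x i ^ (q + s) := by
    simp only [← Finset.sum_add_distrib, ← mul_add]
    exact Finset.sum_le_sum fun i _ ↦ Finset.sum_le_sum fun j _ ↦
      mul_le_mul_of_nonneg_left (pow_mul_pow_add_pow_mul_pow_le h _ _) (hw i j)
  rw [hswap fun i j ↦ x i ^ q * x j ^ s, hswap fun _ j ↦ x j ^ (q + s)] at hsum
  linarith

variable {𝕜 : Type*} [RCLike 𝕜] [DecidableEq ι] {H A : Matrix ι ι 𝕜}

theorem pow_eq_conjStarAlgAut_diagonal (hH : H.IsHermitian) (q : ℕ) :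
    H ^ q = Unitary.conjStarAlgAut 𝕜 _ hH.eigenvectorUnitary
      (diagonal fun i ↦ ((hH.eigenvalues i ^ q : ℝ) : 𝕜)) := by
  conv_lhs => rw [hH.spectral_theorem]
  rw [← map_pow, diagonal_pow]
  congr 2 with i
  simp

theorem trace_pow_eq_sum_eigenvalues_pow (hH : H.IsHermitian) (q : ℕ) :
    (H ^ q).trace = ∑ i, ((hH.eigenvalues i ^ q : ℝ) : 𝕜) := by
  rw [pow_eq_conjStarAlgAut_diagonal hH, Unitary.conjStarAlgAut_apply, trace_mul_cycle,
    Unitary.coe_star_mul_self, one_mul, trace_diagonal]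

theorem norm_eq_norm_eigenvalues (hH : H.IsHermitian) : ‖H‖ = ‖hH.eigenvalues‖ := by
  have h := pow_eq_conjStarAlgAut_diagonal hH 1
  rw [pow_one, Unitary.conjStarAlgAut_apply] at h
  conv_lhs => rw [h, ← Unitary.coe_star, CStarRing.norm_mul_coe_unitary,
    CStarRing.norm_coe_unitary_mul, l2_opNorm_diagonal]
  simp [Pi.norm_def]

theorem norm_pow_le_re_trace_pow (hH : H.PosSemidef) {p : ℕ} (hp : p ≠ 0) :
    ‖H‖ ^ p ≤ RCLike.re (H ^ p).trace := by
  have hpow i := pow_nonneg (hH.eigenvalues_nonneg i) p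
  rw [norm_eq_norm_eigenvalues hH.1, trace_pow_eq_sum_eigenvalues_pow hH.1, ← RCLike.ofReal_sum,
    RCLike.ofReal_re]
  cases isEmpty_or_nonempty ι
  · simp [Subsingleton.elim hH.1.eigenvalues 0, hp]
  · obtain ⟨i, hi⟩ := Finite.exists_max hH.1.eigenvalues
    have hnorm : ‖hH.1.eigenvalues‖ ≤ hH.1.eigenvalues i :=
      (pi_norm_le_iff_of_nonneg (hH.eigenvalues_nonneg i)).2 fun j ↦ by
        simpa only [Real.norm_of_nonneg (hH.eigenvalues_nonneg j)] using hi j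
    exact (pow_le_pow_left₀ (norm_nonneg _) hnorm p).trans
      (Finset.single_le_sum (f := fun i ↦ hH.1.eigenvalues i ^ p) (fun j _ ↦ hpow j)
        (Finset.mem_univ i))

theorem re_trace_mul_pow_mul_mul_pow (hH : H.IsHermitian) (hA : A.IsHermitian) (q s : ℕ) :
    RCLike.re (A * H ^ q * A * H ^ s).trace
      = ∑ i, ∑ j, ‖((hH.eigenvectorUnitary : Matrix ι ι 𝕜)ᴴ * A *
          (hH.eigenvectorUnitary : Matrix ι ι 𝕜)) i j‖ ^ 2
            * (hH.eigenvalues j ^ q * hH.eigenvalues i ^ s) := by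
  set U := (hH.eigenvectorUnitary : Matrix ι ι 𝕜)
  set C := Uᴴ * A * U
  have hC : C.IsHermitian := isHermitian_conjTranspose_mul_mul U hA
  have htrace : (A * H ^ q * A * H ^ s).trace
      = (C * diagonal (fun i ↦ ((hH.eigenvalues i ^ q : ℝ) : 𝕜)) * C
          * diagonal (fun i ↦ ((hH.eigenvalues i ^ s : ℝ) : 𝕜))).trace := by
    simp only [pow_eq_conjStarAlgAut_diagonal hH, Unitary.conjStarAlgAut_apply]
    rw [← mul_assoc, trace_mul_comm]
    simp only [C, U, ← star_eq_conjTranspose, mul_assoc]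
  rw [htrace, trace, map_sum]
  refine Finset.sum_congr rfl fun i _ ↦ ?_
  rw [diag_apply, mul_diagonal, mul_apply, Finset.sum_mul, map_sum]
  refine Finset.sum_congr rfl fun j _ ↦ ?_
  rw [mul_diagonal, ← hC.apply j i, mul_right_comm (C i j), RCLike.star_def, RCLike.mul_conj]
  norm_cast
  rw [mul_assoc]

theorem re_trace_mul_pow_mul_mul_pow_le (hH : H.IsHermitian) (hA : A.IsHermitian) {q s : ℕ}
    (h : Even (q + s)) :
    RCLike.re (A * H ^ q * A * H ^ s).trace ≤ RCLike.re (A * A * H ^ (q + s)).trace := by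
  have hC := isHermitian_conjTranspose_mul_mul (hH.eigenvectorUnitary : Matrix ι ι 𝕜) hA
  have hsq := re_trace_mul_pow_mul_mul_pow hH hA 0 (q + s)
  simp only [pow_zero, mul_one, one_mul] at hsq
  rw [hsq, re_trace_mul_pow_mul_mul_pow hH hA]
  refine sum_sum_mul_pow_mul_pow_le (fun _ _ ↦ sq_nonneg _) (fun i j ↦ ?_) h _
  rw [← hC.apply i j, norm_star]

theorem re_trace_mul_pow_le_re_trace_pow (hH : H.IsHermitian) {V : Matrix ι ι 𝕜}
    (hV : (1 - V).PosSemidef) {n : ℕ} (hn : Even n) :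
    RCLike.re (V * H ^ n).trace ≤ RCLike.re (H ^ n).trace := by
  obtain ⟨p, rfl⟩ := hn
  have h := RCLike.re_monotone (hV.conjTranspose_mul_mul_same (H ^ p)).trace_nonneg
  rw [conjTranspose_pow, hH.eq, trace_mul_comm, ← mul_assoc, ← pow_add, trace_mul_comm, sub_mul,
    one_mul, trace_sub, map_sub, map_zero] at h
  exact sub_nonneg.1 h

end TraceInequalities

section TraceMoments

open scoped Nat Matrix.Norms.L2Operator

variable {ι σ : Type*} [Fintype σ] {A : σ → Matrix ι ι ℝ}

theorem isHermitian_sum_smul (hA : ∀ k, (A k).IsHermitian) (x : σ → ℝ) :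
    (∑ k, x k • A k).IsHermitian :=
  isSelfAdjoint_sum _ fun k _ ↦ (IsSelfAdjoint.all (x k)).smul (hA k)

variable {Ω : Type*} [MeasurableSpace Ω] {μ : Measure Ω} {z : σ → Ω → ℝ} [Fintype ι] [DecidableEq ι]

theorem integrable_trace {X : Ω → Matrix ι ι ℝ} (hX : Integrable X μ) :
    Integrable (fun ω ↦ (X ω).trace) μ :=
  (traceLinearMap ι ℝ ℝ).toContinuousLinearMap.integrable_comp hX

theorem integral_trace {X : Ω → Matrix ι ι ℝ} (hX : Integrable X μ) :
    ∫ ω, (X ω).trace ∂μ = (∫ ω, X ω ∂μ).trace :=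
  (traceLinearMap ι ℝ ℝ).toContinuousLinearMap.integral_comp_comm hX

theorem integral_trace_sum_smul_pow_add_two (hindep : iIndepFun z μ)
    (hz : ∀ k, HasLaw (z k) (gaussianReal 0 1) μ) (A : σ → Matrix ι ι ℝ) (n : ℕ) :
    ∫ ω, ((∑ i, z i ω • A i) ^ (n + 2)).trace ∂μ = ∑ k, ∑ q ∈ Finset.range (n + 1),
      ∫ ω, (A k * (∑ i, z i ω • A i) ^ (n - q) * A k * (∑ i, z i ω • A i) ^ q).trace ∂μ := by
  have := hindep.isProbabilityMeasure
  have hgauss k : HasGaussianLaw (z k) μ := (hz k).hasGaussianLaw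
  rw [integral_trace (integrable_sum_smul_pow hgauss A (n + 2)),
    integral_sum_smul_pow_add_two hindep hz, trace_sum]
  refine Finset.sum_congr rfl fun k _ ↦ ?_
  rw [trace_sum]
  refine Finset.sum_congr rfl fun q _ ↦ ?_
  have hint := integrable_pow_mul_mul_pow (memLp_sum_smul hgauss A) (A k) (n - q) q
  rw [← integral_const_mul_of_integrable hint, ← integral_trace (hint.const_mul (A k))]
  simp only [mul_assoc]

theorem integral_trace_sum_smul_pow_add_two_le (hindep : iIndepFun z μ)
    (hz : ∀ k, HasLaw (z k) (gaussianReal 0 1) μ) (hA : ∀ k, (A k).IsHermitian) {n : ℕ}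
    (hn : Even n) :
    ∫ ω, ((∑ i, z i ω • A i) ^ (n + 2)).trace ∂μ
      ≤ (n + 1) * ∫ ω, ((∑ k, A k * A k) * (∑ i, z i ω • A i) ^ n).trace ∂μ := by
  have := hindep.isProbabilityMeasure
  have hgauss k : HasGaussianLaw (z k) μ := (hz k).hasGaussianLaw
  have hint k : Integrable (fun ω ↦ (A k * A k * (∑ i, z i ω • A i) ^ n).trace) μ :=
    integrable_trace ((integrable_sum_smul_pow hgauss A n).const_mul _)
  have hint' k q : Integrable (fun ω ↦
      (A k * (∑ i, z i ω • A i) ^ (n - q) * A k * (∑ i, z i ω • A i) ^ q).trace) μ := by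
    simpa only [mul_assoc] using integrable_trace
      ((integrable_pow_mul_mul_pow (memLp_sum_smul hgauss A) (A k) (n - q) q).const_mul (A k))
  calc ∫ ω, ((∑ i, z i ω • A i) ^ (n + 2)).trace ∂μ
      ≤ ∑ k, ∑ _q ∈ Finset.range (n + 1),
          ∫ ω, (A k * A k * (∑ i, z i ω • A i) ^ n).trace ∂μ := by
        rw [integral_trace_sum_smul_pow_add_two hindep hz]
        refine Finset.sum_le_sum fun k _ ↦ Finset.sum_le_sum fun q hq ↦
          integral_mono (hint' k q) (hint k) fun ω ↦ ?_
        have hadd := Nat.sub_add_cancel (Finset.mem_range_succ_iff.1 hq)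
        simpa only [RCLike.re_to_real, hadd] using
          re_trace_mul_pow_mul_mul_pow_le (isHermitian_sum_smul hA _) (hA k)
            (q := n - q) (s := q) (by rwa [hadd])
    _ = (n + 1) * ∫ ω, ((∑ k, A k * A k) * (∑ i, z i ω • A i) ^ n).trace ∂μ := by
        simp only [Finset.sum_mul, trace_sum, integral_finsetSum _ fun k _ ↦ hint k,
          Finset.sum_const, Finset.card_range, nsmul_eq_mul, Finset.mul_sum, Nat.cast_succ]

theorem integral_trace_sum_smul_pow_le (hindep : iIndepFun z μ)
    (hz : ∀ k, HasLaw (z k) (gaussianReal 0 1) μ) (hA : ∀ k, (A k).IsHermitian)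
    (hAA : (1 - ∑ k, A k * A k).PosSemidef) (p : ℕ) :
    ∫ ω, ((∑ i, z i ω • A i) ^ (2 * (p + 1))).trace ∂μ
      ≤ (2 * p + 1)‼ * (∑ k, A k * A k).trace := by
  have := hindep.isProbabilityMeasure
  have hgauss k : HasGaussianLaw (z k) μ := (hz k).hasGaussianLaw
  have hstep := integral_trace_sum_smul_pow_add_two_le hindep hz hA (even_two_mul p)
  induction p with
  | zero => simpa using hstep
  | succ p ih =>
    have hpow := integrable_sum_smul_pow hgauss A (2 * (p + 1))
    calc ∫ ω, ((∑ i, z i ω • A i) ^ (2 * (p + 1 + 1))).trace ∂μ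
        ≤ _ := hstep
      _ ≤ ((2 * (p + 1) : ℕ) + 1) * ∫ ω, ((∑ i, z i ω • A i) ^ (2 * (p + 1))).trace ∂μ := by
          refine mul_le_mul_of_nonneg_left (integral_mono (integrable_trace (hpow.const_mul _))
            (integrable_trace hpow) fun ω ↦ ?_) (by positivity)
          exact re_trace_mul_pow_le_re_trace_pow (isHermitian_sum_smul hA _) hAA (even_two_mul _)
      _ ≤ ((2 * (p + 1) : ℕ) + 1) *
            ((2 * p + 1)‼ * (∑ k, A k * A k).trace) := by
          gcongr
          exact ih (integral_trace_sum_smul_pow_add_two_le hindep hz hA (even_two_mul p))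
      _ = _ := by
          rw [mul_add_one, add_right_comm, Nat.doubleFactorial_add_two]
          push_cast
          ring

end TraceMoments

section HermitianDilation

open scoped ComplexOrder Matrix.Norms.L2Operator

/-- The Hermitian dilation of a rectangular matrix `G`, the square block matrix `[0, G; Gᴴ, 0]`;
its even powers are block diagonal with blocks `(G * Gᴴ) ^ p` and `(Gᴴ * G) ^ p`, which reduces
norm bounds for `G` to trace bounds for a Hermitian matrix. -/
def hermitianDilation {ι κ R : Type*} [Zero R] [Star R] (G : Matrix ι κ R) :
    Matrix (ι ⊕ κ) (ι ⊕ κ) R :=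
  fromBlocks 0 G Gᴴ 0

variable {ι κ σ R 𝕜 : Type*} [Fintype σ] [RCLike 𝕜]

theorem isHermitian_hermitianDilation [AddMonoid R] [StarAddMonoid R] (G : Matrix ι κ R) :
    (hermitianDilation G).IsHermitian :=
  isHermitian_zero.fromBlocks rfl isHermitian_zero

theorem hermitianDilation_sum_smul {S : Type*} [Star S] [TrivialStar S] [AddCommMonoid R]
    [StarAddMonoid R] [SMulZeroClass S R] [StarModule S R] (x : σ → S) (B : σ → Matrix ι κ R) :
    hermitianDilation (∑ k, x k • B k) = ∑ k, x k • hermitianDilation (B k) := by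
  ext (i | i) (j | j) <;> simp [hermitianDilation, Matrix.sum_apply, star_sum, star_smul]

theorem posSemidef_fromBlocks_diagonal [Finite ι] [Finite κ] {A : Matrix ι ι 𝕜}
    {D : Matrix κ κ 𝕜} (hA : A.PosSemidef) (hD : D.PosSemidef) :
    (fromBlocks A 0 0 D).PosSemidef := by
  cases nonempty_fintype ι
  cases nonempty_fintype κ
  refine PosSemidef.of_dotProduct_mulVec_nonneg
    (hA.1.fromBlocks conjTranspose_zero hD.1) fun x ↦ ?_
  rw [fromBlocks_mulVec]
  simpa [dotProduct, Fintype.sum_sum_type] using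
    add_nonneg (hA.dotProduct_mulVec_nonneg (x ∘ Sum.inl))
      (hD.dotProduct_mulVec_nonneg (x ∘ Sum.inr))

variable [Fintype ι] [Fintype κ]

theorem trace_fromBlocks [AddCommMonoid R] (A : Matrix ι ι R) (B : Matrix ι κ R)
    (C : Matrix κ ι R) (D : Matrix κ κ R) : (fromBlocks A B C D).trace = A.trace + D.trace := by
  simp only [trace, diag_apply, Fintype.sum_sum_type, fromBlocks_apply₁₁, fromBlocks_apply₂₂]

theorem hermitianDilation_mul_self [NonUnitalNonAssocSemiring R] [StarRing R]
    (G : Matrix ι κ R) :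
    hermitianDilation G * hermitianDilation G = fromBlocks (G * Gᴴ) 0 0 (Gᴴ * G) := by
  simp only [hermitianDilation, fromBlocks_multiply, Matrix.zero_mul, Matrix.mul_zero, zero_add,
    add_zero]

theorem sum_hermitianDilation_mul_self [NonUnitalNonAssocSemiring R] [StarRing R]
    (B : σ → Matrix ι κ R) : ∑ k, hermitianDilation (B k) * hermitianDilation (B k)
      = fromBlocks (∑ k, B k * (B k)ᴴ) 0 0 (∑ k, (B k)ᴴ * B k) := by
  simp only [hermitianDilation_mul_self]
  ext (i | i) (j | j) <;> simp [Matrix.sum_apply]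

theorem trace_sum_hermitianDilation_mul_self [CommSemiring R] [StarRing R]
    (B : σ → Matrix ι κ R) : (∑ k, hermitianDilation (B k) * hermitianDilation (B k)).trace
      = 2 * (∑ k, (B k)ᴴ * B k).trace := by
  rw [sum_hermitianDilation_mul_self, trace_fromBlocks, two_mul, trace_sum, trace_sum]
  simp only [trace_mul_comm (B _)]

variable [DecidableEq ι] [DecidableEq κ]

theorem trace_mul_pow_comm [CommSemiring R] (A : Matrix ι κ R) (B : Matrix κ ι R) {p : ℕ}
    (hp : p ≠ 0) : ((A * B) ^ p).trace = ((B * A) ^ p).trace := by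
  obtain ⟨p, rfl⟩ := Nat.exists_eq_succ_of_ne_zero hp
  have hcomm (q : ℕ) : (A * B) ^ q * A = A * (B * A) ^ q := by
    induction q with
    | zero => rw [pow_zero, pow_zero, Matrix.one_mul, Matrix.mul_one]
    | succ q ih =>
      rw [pow_succ', Matrix.mul_assoc, ih, pow_succ']
      simp only [Matrix.mul_assoc]
  rw [pow_succ, ← Matrix.mul_assoc, hcomm, trace_mul_comm, ← Matrix.mul_assoc, ← pow_succ']

theorem posSemidef_one_sub_sum_hermitianDilation_mul_self {B : σ → Matrix ι κ 𝕜}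
    (hBB : (1 - ∑ k, B k * (B k)ᴴ).PosSemidef) (hBB' : (1 - ∑ k, (B k)ᴴ * B k).PosSemidef) :
    (1 - ∑ k, hermitianDilation (B k) * hermitianDilation (B k)).PosSemidef := by
  rw [sum_hermitianDilation_mul_self, ← fromBlocks_one, sub_eq_add_neg, fromBlocks_neg,
    fromBlocks_add, neg_zero, neg_zero, add_zero, add_zero, ← sub_eq_add_neg, ← sub_eq_add_neg]
  exact posSemidef_fromBlocks_diagonal hBB hBB'

theorem two_mul_norm_pow_le_re_trace_hermitianDilation_pow (G : Matrix ι κ 𝕜) {p : ℕ}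
    (hp : p ≠ 0) : 2 * ‖G‖ ^ (2 * p) ≤ RCLike.re (hermitianDilation G ^ (2 * p)).trace := by
  have h := norm_pow_le_re_trace_pow (posSemidef_conjTranspose_mul_self G) hp
  rw [l2_opNorm_conjTranspose_mul_self, ← sq, ← pow_mul] at h
  rw [pow_mul (hermitianDilation G), sq, hermitianDilation_mul_self, fromBlocks_diagonal_pow,
    trace_fromBlocks, trace_mul_pow_comm _ _ hp, map_add, ← two_mul]
  exact mul_le_mul_of_nonneg_left h zero_le_two

end HermitianDilation

section NormMoments

open scoped Nat Matrix.Norms.L2Operator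

theorem cosh_le_mul_exp_of_pow_le {s d : ℝ} (hs : 0 ≤ s)
    (h : ∀ p : ℕ, s ^ p ≤ d * (2 * p - 1)‼) : Real.cosh s ≤ d * Real.exp (s / 2) := by
  have hexp : HasSum (fun p : ℕ ↦ d * ((s / 2) ^ p / p !)) (d * Real.exp (s / 2)) := by
    rw [Real.exp_eq_exp_ℝ]
    exact (NormedSpace.expSeries_div_hasSum_exp (s / 2)).mul_left d
  refine hasSum_le (fun p ↦ ?_) (Real.hasSum_cosh s) hexp
  have hfactorial : (2 * p)! = 2 ^ p * p ! * (2 * p - 1)‼ := by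
    cases p with
    | zero => rfl
    | succ p =>
      rw [← Nat.doubleFactorial_two_mul]
      exact Nat.factorial_eq_mul_doubleFactorial _
  have hne : ((2 * p - 1)‼ : ℝ) ≠ 0 := by exact_mod_cast (Nat.doubleFactorial_pos _).ne'
  calc s ^ (2 * p) / (2 * p)! ≤ s ^ p * (d * (2 * p - 1)‼) / (2 * p)! := by
        rw [two_mul p, pow_add, ← two_mul]
        gcongr
        exact h p
    _ = d * ((s / 2) ^ p / p !) := by
        rw [hfactorial]
        push_cast
        rw [div_pow]
        field_simp [hne]

theorem le_two_mul_log_of_pow_le {s d : ℝ} (hs : 0 ≤ s)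
    (h : ∀ p : ℕ, s ^ p ≤ d * (2 * p - 1)‼) : s ≤ 2 * Real.log (2 * d) := by
  have hexp : Real.exp (s / 2) ≤ 2 * d := by
    have hcosh := cosh_le_mul_exp_of_pow_le hs h
    have hsplit : Real.exp s = Real.exp (s / 2) * Real.exp (s / 2) := by
      rw [← Real.exp_add, add_halves]
    rw [Real.cosh_eq, hsplit] at hcosh
    refine le_of_mul_le_mul_right ?_ (Real.exp_pos (s / 2))
    linarith [Real.exp_pos (-s)]
  linarith [(Real.le_log_iff_exp_le ((Real.exp_pos _).trans_le hexp)).2 hexp]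

variable {Ω : Type*} [MeasurableSpace Ω] {μ : Measure Ω}

theorem pow_integral_le_integral_pow [IsProbabilityMeasure μ] {X : Ω → ℝ} (hX : 0 ≤ᵐ[μ] X)
    (hint : Integrable X μ) {p : ℕ} (hpow : Integrable (fun ω ↦ X ω ^ p) μ) :
    (∫ ω, X ω ∂μ) ^ p ≤ ∫ ω, X ω ^ p ∂μ :=
  (convexOn_pow p).map_integral_le (continuous_pow p).continuousOn isClosed_Ici hX hint hpow

variable {ι κ σ : Type*} [Fintype ι] [Fintype κ] [Fintype σ] [DecidableEq ι] [DecidableEq κ]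
  {B : σ → Matrix ι κ ℝ} {z : σ → Ω → ℝ}

theorem integrable_norm_sum_smul_pow [IsFiniteMeasure μ] {E : Type*} [NormedAddCommGroup E]
    [NormedSpace ℝ E] (hz : ∀ k, HasGaussianLaw (z k) μ) (B : σ → E) (p : ℕ) :
    Integrable (fun ω ↦ ‖∑ k, z k ω • B k‖ ^ p) μ :=
  (memLp_sum_smul hz B p (ENNReal.natCast_ne_top p)).integrable_norm_pow'

theorem integral_norm_sum_smul_pow_le_trace (hindep : iIndepFun z μ)
    (hz : ∀ k, HasLaw (z k) (gaussianReal 0 1) μ)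
    (hBB : (1 - ∑ k, B k * (B k)ᴴ).PosSemidef) (hBB' : (1 - ∑ k, (B k)ᴴ * B k).PosSemidef)
    {p : ℕ} (hp : p ≠ 0) :
    ∫ ω, ‖∑ k, z k ω • B k‖ ^ (2 * p) ∂μ ≤ (2 * p - 1)‼ * (∑ k, (B k)ᴴ * B k).trace := by
  obtain ⟨p, rfl⟩ := Nat.exists_eq_add_one_of_ne_zero hp
  have := hindep.isProbabilityMeasure
  have hgauss k : HasGaussianLaw (z k) μ := (hz k).hasGaussianLaw
  have hdilation := integral_trace_sum_smul_pow_le hindep hz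
    (fun k ↦ isHermitian_hermitianDilation (B k))
    (posSemidef_one_sub_sum_hermitianDilation_mul_self hBB hBB') p
  rw [trace_sum_hermitianDilation_mul_self] at hdilation
  have hle : ∫ ω, 2 * ‖∑ k, z k ω • B k‖ ^ (2 * (p + 1)) ∂μ
      ≤ ∫ ω, ((∑ k, z k ω • hermitianDilation (B k)) ^ (2 * (p + 1))).trace ∂μ := by
    refine integral_mono ((integrable_norm_sum_smul_pow hgauss B _).const_mul 2)
      (integrable_trace (integrable_sum_smul_pow hgauss _ _)) fun ω ↦ ?_
    rw [← hermitianDilation_sum_smul]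
    exact two_mul_norm_pow_le_re_trace_hermitianDilation_pow _ hp
  rw [integral_const_mul] at hle
  rw [show 2 * (p + 1) - 1 = 2 * p + 1 by lia]
  linarith

theorem integral_norm_sum_smul_pow_le_card [Nonempty κ] (hindep : iIndepFun z μ)
    (hz : ∀ k, HasLaw (z k) (gaussianReal 0 1) μ)
    (hBB : (1 - ∑ k, B k * (B k)ᴴ).PosSemidef) (hBB' : (1 - ∑ k, (B k)ᴴ * B k).PosSemidef)
    (p : ℕ) : ∫ ω, ‖∑ k, z k ω • B k‖ ^ (2 * p) ∂μ ≤ Fintype.card κ * (2 * p - 1)‼ := by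
  rcases eq_or_ne p 0 with rfl | hp
  · have := hindep.isProbabilityMeasure
    simpa using Nat.one_le_iff_ne_zero.2 Fintype.card_ne_zero
  · have htrace := hBB'.trace_nonneg
    rw [trace_sub, trace_one, sub_nonneg] at htrace
    refine (integral_norm_sum_smul_pow_le_trace hindep hz hBB hBB' hp).trans ?_
    rw [mul_comm (Fintype.card κ : ℝ)]
    gcongr

theorem integral_sq_norm_sum_smul_le_log [Nonempty κ] (hindep : iIndepFun z μ)
    (hz : ∀ k, HasLaw (z k) (gaussianReal 0 1) μ)
    (hBB : (1 - ∑ k, B k * (B k)ᴴ).PosSemidef) (hBB' : (1 - ∑ k, (B k)ᴴ * B k).PosSemidef) :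
    ∫ ω, ‖∑ k, z k ω • B k‖ ^ 2 ∂μ ≤ 2 * Real.log (2 * Fintype.card κ) := by
  have := hindep.isProbabilityMeasure
  have hint p := integrable_norm_sum_smul_pow (fun k ↦ (hz k).hasGaussianLaw) B p
  refine le_two_mul_log_of_pow_le (by positivity) fun p ↦ ?_
  refine (pow_integral_le_integral_pow (.of_forall fun _ ↦ sq_nonneg _) (hint 2) ?_).trans ?_ <;>
    simp only [← pow_mul]
  · exact hint (2 * p)
  · exact integral_norm_sum_smul_pow_le_card hindep hz hBB hBB' p

end NormMoments

section NormalizedSeries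

open scoped NNReal

variable {Ω : Type*} [MeasurableSpace Ω] {μ : Measure Ω}

theorem sq_integral_abs_mul_le {f g : Ω → ℝ} (hf : MemLp f 2 μ) (hg : MemLp g 2 μ) :
    (∫ ω, |f ω * g ω| ∂μ) ^ 2 ≤ (∫ ω, f ω ^ 2 ∂μ) * ∫ ω, g ω ^ 2 ∂μ := by
  have hholder := integral_mul_norm_le_Lp_mul_Lq (μ := μ) (f := f) (g := g)
    Real.HolderConjugate.two_two (by simpa using hf) (by simpa using hg)
  simp only [Real.norm_eq_abs, Real.rpow_two, sq_abs, ← Real.sqrt_eq_rpow, ← abs_mul] at hholder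
  calc (∫ ω, |f ω * g ω| ∂μ) ^ 2 ≤ (√(∫ ω, f ω ^ 2 ∂μ) * √(∫ ω, g ω ^ 2 ∂μ)) ^ 2 := by gcongr
    _ = (∫ ω, f ω ^ 2 ∂μ) * ∫ ω, g ω ^ 2 ∂μ := by
      rw [mul_pow, Real.sq_sqrt (by positivity), Real.sq_sqrt (by positivity)]

theorem sq_integral_abs_clm_le [IsFiniteMeasure μ] {E : Type*} [NormedAddCommGroup E]
    [NormedSpace ℝ E] {X : Ω → E} (hX : MemLp X 2 μ) (ℓ : StrongDual ℝ E) :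
    (∫ ω, |ℓ (X ω)| ∂μ) ^ 2 ≤ (∫ ω, ℓ (X ω) ^ 2 / ‖X ω‖ ^ 2 ∂μ) * ∫ ω, ‖X ω‖ ^ 2 ∂μ := by
  have hdiv_mul ω : ℓ (X ω) = ℓ (X ω) / ‖X ω‖ * ‖X ω‖ :=
    (div_mul_cancel_of_imp fun h ↦ by rw [norm_eq_zero.1 h, map_zero]).symm
  have hdiv : MemLp (fun ω ↦ ℓ (X ω) / ‖X ω‖) 2 μ := by
    have hmeas := (ℓ.continuous.comp_aestronglyMeasurable hX.1).aemeasurable.div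
      hX.1.norm.aemeasurable
    refine .of_bound hmeas.aestronglyMeasurable ‖ℓ‖ (.of_forall fun ω ↦ ?_)
    rw [norm_div, norm_norm]
    exact ℓ.ratio_le_opNorm (X ω)
  simpa only [← hdiv_mul, div_pow] using sq_integral_abs_mul_le hdiv hX.norm

variable {σ : Type*} [Fintype σ] {z : σ → Ω → ℝ}

theorem ae_sum_smul_ne_zero {E : Type*} [AddCommGroup E] [TopologicalSpace E] [Module ℝ E]
    [SeparatingDual ℝ E] {m : σ → ℝ} {v : σ → ℝ≥0} (hindep : iIndepFun z μ)
    (hz : ∀ k, HasLaw (z k) (gaussianReal (m k) (v k)) μ) {B : σ → E} {k : σ} (hv : v k ≠ 0)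
    (hB : B k ≠ 0) : ∀ᵐ ω ∂μ, ∑ i, z i ω • B i ≠ 0 := by
  obtain ⟨ℓ, hℓ⟩ := SeparatingDual.exists_ne_zero (R := ℝ) hB
  have hlaw := hasLaw_sum_mul_gaussianReal hindep hz fun i ↦ ℓ (B i)
  have hvar : ∑ i, NNReal.mk (ℓ (B i) ^ 2) (sq_nonneg _) * v i ≠ 0 := by
    refine (Finset.sum_pos' (fun _ _ ↦ zero_le) ⟨k, Finset.mem_univ k, pos_iff_ne_zero.2 ?_⟩).ne'
    exact mul_ne_zero (fun h ↦ hℓ (pow_eq_zero_iff two_ne_zero |>.1 (congrArg NNReal.toReal h))) hv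
  have := nullSingletonClass_gaussianReal (μ := ∑ i, ℓ (B i) * m i) hvar
  filter_upwards [(hlaw.ae_iff (measurableSet_singleton 0).compl.mem).2 (Measure.ae_ne _ 0)]
    with ω hω hzero
  exact hω (by simpa using congrArg ℓ hzero)

theorem sq_integral_abs_sum_mul (hindep : iIndepFun z μ)
    (hz : ∀ k, HasLaw (z k) (gaussianReal 0 1) μ) (c : σ → ℝ) :
    (∫ ω, |∑ k, z k ω * c k| ∂μ) ^ 2 = 2 / Real.pi * ∑ k, c k ^ 2 := by
  have hlaw := hasLaw_sum_mul_gaussianReal hindep hz c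
  simp only [mul_zero, Finset.sum_const_zero, mul_one] at hlaw
  rw [← Function.comp_def, hlaw.integral_comp (by fun_prop), integral_abs_gaussianReal,
    Real.sq_sqrt (by positivity), mul_div_right_comm, NNReal.coe_sum]
  rfl

theorem two_div_pi_mul_mul_sum_sq_le_integral {E : Type*} [NormedAddCommGroup E]
    [NormedSpace ℝ E] (hindep : iIndepFun z μ) (hz : ∀ k, HasLaw (z k) (gaussianReal 0 1) μ)
    (B : σ → E) (ℓ : StrongDual ℝ E) {K : ℝ}
    (hK : 0 < K) (hle : ∫ ω, ‖∑ k, z k ω • B k‖ ^ 2 ∂μ ≤ K) :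
    2 / (Real.pi * K) * ∑ k, ℓ (B k) ^ 2
      ≤ ∫ ω, ℓ (∑ k, z k ω • B k) ^ 2 / ‖∑ k, z k ω • B k‖ ^ 2 ∂μ := by
  have := hindep.isProbabilityMeasure
  have hmem := memLp_sum_smul (fun k ↦ (hz k).hasGaussianLaw) B 2 ENNReal.ofNat_ne_top
  have hsq := sq_integral_abs_sum_mul hindep hz fun k ↦ ℓ (B k)
  rw [← div_div, div_mul_eq_mul_div, div_le_iff₀ hK, ← hsq]
  calc (∫ ω, |∑ k, z k ω * ℓ (B k)| ∂μ) ^ 2 = (∫ ω, |ℓ (∑ k, z k ω • B k)| ∂μ) ^ 2 := by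
        simp only [map_sum, map_smul, smul_eq_mul]
    _ ≤ _ := sq_integral_abs_clm_le hmem ℓ
    _ ≤ _ := by gcongr

end NormalizedSeries

section VecCovariance

open scoped Matrix.Norms.L2Operator

variable {ι κ σ : Type*} [Fintype ι] [Fintype κ] [Fintype σ]

theorem dotProduct_sum_vecMulVec_self_mulVec {R : Type*} [CommSemiring R] (b : σ → ι → R)
    (v : ι → R) : v ⬝ᵥ (∑ k, vecMulVec (b k) (b k)) *ᵥ v = ∑ k, (v ⬝ᵥ b k) ^ 2 := by
  rw [sum_mulVec, dotProduct_sum]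
  refine Finset.sum_congr rfl fun k _ ↦ ?_
  rw [dotProduct_mulVec, vecMul_vecMulVec, smul_dotProduct, dotProduct_comm (b k) v, smul_eq_mul,
    sq]

variable {Ω : Type*} [MeasurableSpace Ω] {μ : Measure Ω} [DecidableEq κ] {z : σ → Ω → ℝ}

theorem two_div_pi_mul_mul_dotProduct_le_integral (hindep : iIndepFun z μ)
    (hz : ∀ k, HasLaw (z k) (gaussianReal 0 1) μ) (B : σ → Matrix ι κ ℝ) {K : ℝ} (hK : 0 < K)
    (hle : ∫ ω, ‖∑ k, z k ω • B k‖ ^ 2 ∂μ ≤ K) (v : κ × ι → ℝ) :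
    2 / (Real.pi * K) * (v ⬝ᵥ (∑ k, vecMulVec (vec (B k)) (vec (B k))) *ᵥ v)
      ≤ ∫ ω, (v ⬝ᵥ vec (∑ k, z k ω • B k)) ^ 2 / ‖∑ k, z k ω • B k‖ ^ 2 ∂μ := by
  let ℓ : Matrix ι κ ℝ →ₗ[ℝ] ℝ :=
    { toFun G := v ⬝ᵥ vec G
      map_add' G H := by rw [vec_add, dotProduct_add]
      map_smul' c G := by rw [vec_smul, dotProduct_smul, RingHom.id_apply] }
  rw [dotProduct_sum_vecMulVec_self_mulVec]
  exact two_div_pi_mul_mul_sum_sq_le_integral hindep hz B ℓ.toContinuousLinearMap hK hle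

theorem sigmaMax_eq_norm {n m : ℕ} (G : Matrix (Fin n) (Fin m) ℝ) : sigmaMax G = ‖G‖ := by
  rw [l2_opNorm_def]
  rfl

theorem stmt3_general [DecidableEq ι] {B : σ → Matrix ι κ ℝ} (hB : B ≠ 0)
    (hBtB : (1 - ∑ k, (B k)ᵀ * B k).PosSemidef) (hBBt : (1 - ∑ k, B k * (B k)ᵀ).PosSemidef)
    (hindep : iIndepFun z μ) (hgauss : ∀ k, μ.map (z k) = gaussianReal 0 1) :
    (∀ᵐ ω ∂μ, 0 < ‖∑ k, z k ω • B k‖) ∧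
    ∀ v : κ × ι → ℝ,
      max (2 / (Real.pi * Fintype.card κ)) (1 / (Real.pi * Real.log (2 * Fintype.card κ)))
          * (v ⬝ᵥ (∑ k, vecMulVec (vec (B k)) (vec (B k))) *ᵥ v)
        ≤ ∫ ω, (v ⬝ᵥ vec (∑ k, z k ω • B k)) ^ 2 / ‖∑ k, z k ω • B k‖ ^ 2 ∂μ := by
  have hz k : HasLaw (z k) (gaussianReal 0 1) μ :=
    ⟨.of_map_ne_zero (by rw [hgauss k]; exact IsProbabilityMeasure.ne_zero _), hgauss k⟩
  obtain ⟨k, hk⟩ := Function.ne_iff.1 hB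
  simp only [← conjTranspose_eq_transpose_of_trivial] at hBtB hBBt
  refine ⟨(ae_sum_smul_ne_zero hindep hz one_ne_zero hk).mono fun _ ↦ norm_pos_iff.2, fun v ↦ ?_⟩
  have : Nonempty κ := by
    by_contra hκ
    rw [not_nonempty_iff] at hκ
    exact hk (Subsingleton.elim _ _)
  have hcard : (1 : ℝ) ≤ Fintype.card κ := Nat.one_le_cast.2 Fintype.card_pos
  have hlog : 0 < Real.log (2 * Fintype.card κ) := Real.log_pos (by linarith)
  rcases max_choice (2 / (Real.pi * Fintype.card κ))
    (1 / (Real.pi * Real.log (2 * Fintype.card κ))) with h | h <;> rw [h]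
  · refine two_div_pi_mul_mul_dotProduct_le_integral hindep hz B (by positivity) ?_ v
    simpa using integral_norm_sum_smul_pow_le_card hindep hz hBBt hBtB 1
  · rw [← mul_div_mul_left _ _ two_ne_zero, mul_one, mul_left_comm]
    exact two_div_pi_mul_mul_dotProduct_le_integral hindep hz B (by positivity)
      (integral_sq_norm_sum_smul_le_log hindep hz hBBt hBtB) v

end VecCovariance

/-- Theorem 2.1.
For a Gaussian matrix series `G = ∑ₖ zₖ Bₖ` with `∑ₖ Bₖᵀ Bₖ = Iₘ`,
`∑ₖ Bₖ Bₖᵀ ⪯ Iₙ` and covariance `W = ∑ₖ vec(Bₖ)vec(Bₖ)ᵀ`, we have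
`σmax(G) > 0` a.s. and
`E[vec(G)vec(G)ᵀ/σmax(G)²] ⪰ max(2/(πm), 1/(π(log(2m)+1))) W`. -/
theorem stmt3 {n m r : ℕ} (hm : 1 ≤ m) (hmn : m ≤ n)
    (B : Fin r → Matrix (Fin n) (Fin m) ℝ)
    (hBtB : ∑ k, (B k)ᵀ * B k = 1)
    (hBBt : ((1 : Matrix (Fin n) (Fin n) ℝ) - ∑ k, B k * (B k)ᵀ).PosSemidef)
    {Ω : Type*} [MeasurableSpace Ω] (μ : Measure Ω) [IsProbabilityMeasure μ]
    (z : Fin r → Ω → ℝ)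
    (hindep : iIndepFun z μ)
    (hgauss : ∀ k, Measure.map (z k) μ = gaussianReal 0 1)
    (W : Matrix (Fin m × Fin n) (Fin m × Fin n) ℝ)
    (hW : W = ∑ k, Matrix.vecMulVec (vecM (B k)) (vecM (B k))) :
    (∀ᵐ ω ∂μ, 0 < sigmaMax (∑ k, z k ω • B k)) ∧
    ∀ v : Fin m × Fin n → ℝ,
      max (2 / (Real.pi * m)) (1 / (Real.pi * (Real.log (2 * m) + 1)))
          * (v ⬝ᵥ W.mulVec v)
        ≤ ∫ ω, (∑ p : Fin m × Fin n, v p * vecM (∑ k, z k ω • B k) p) ^ 2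
              / (sigmaMax (∑ k, z k ω • B k)) ^ 2 ∂μ := by
  have : NeZero m := ⟨by lia⟩
  have hB : B ≠ 0 := by
    rintro rfl
    simp at hBtB
  have hcontraction : (1 - ∑ k, (B k)ᵀ * B k).PosSemidef := by
    rw [hBtB, sub_self]
    exact .zero
  obtain ⟨hpos, hle⟩ := stmt3_general hB hcontraction hBBt hindep hgauss
  simp only [← sigmaMax_eq_norm, Fintype.card_fin] at hpos hle
  refine ⟨hpos, fun v ↦ hW ▸ (mul_le_mul_of_nonneg_right ?_ ?_).trans (hle v)⟩
  · have hlog : 0 < Real.log (2 * m) := Real.log_pos (by exact_mod_cast (by lia : 1 < 2 * m))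
    gcongr
    exact le_add_of_nonneg_right zero_le_one
  · rw [dotProduct_sum_vecMulVec_self_mulVec]
    positivity
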